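/- Every finite simple graph with at most 8 vertices and at most 20 edges is 2-apex. -/

import Mathlib

/-- `H` is a minor of `G`: there are pairwise disjoint nonempty connected branch sets
in `G`, one for each vertex of `H`, with an edge of `G` between the branch sets of
any two vertices adjacent in `H`. -/
def SimpleGraph.IsMinor {W V : Type*} (H : SimpleGraph W) (G : SimpleGraph V) : Prop :=
  ∃ f : W → Set V,
    (∀ w, (f w).Nonempty) ∧
    (∀ w, (G.induce (f w)).Connected) ∧
    (Pairwise fun w₁ w₂ => Disjoint (f w₁) (f w₂)) ∧
    ∀ ⦃w₁ w₂⦄, H.Adj w₁ w₂ → ∃ v₁ ∈ f w₁, ∃ v₂ ∈ f w₂, G.Adj v₁ v₂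

/-- A graph is planar iff it has no `K₅` minor and no `K₃,₃` minor (Kuratowski–Wagner). -/
def SimpleGraph.IsPlanar {V : Type*} (G : SimpleGraph V) : Prop :=
  ¬ (⊤ : SimpleGraph (Fin 5)).IsMinor G ∧
  ¬ (completeBipartiteGraph (Fin 3) (Fin 3)).IsMinor G

/-- A graph is 2-apex if it becomes planar after deleting at most two vertices. -/
def SimpleGraph.TwoApex {V : Type*} (G : SimpleGraph V) : Prop :=
  ∃ s : Set V, s.ncard ≤ 2 ∧ (G.induce sᶜ).IsPlanar

/-!
Isolated vertices may be added, so the graph has 8 vertices and its complement has at least 8 edges.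
In a graph on `n` vertices without a path on four vertices, adjacent vertices `u`, `v` satisfy
`1 ≤ 1 / d(u) + 1 / d(v)`, with equality only if both degrees are 2, while these quantities sum to
at most `n` over the edges. Hence such a graph has at most `n` edges, and if it has `n` of them it
is a disjoint union of triangles. As 3 does not divide 8, the complement contains a path on four
vertices.

Delete two vertices off this path. In the remaining graph on six vertices, a `K₃,₃` minor would be
spanning, so that the path would lie in the complement of `K₃,₃`, which has components of size 3.
A `K₅` minor would arise from deleting a vertex or contracting an edge `xy`. In the first case one
vertex would cover the edges of the path. In the second `{x, y}` would cover them, although `x` and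
`y` are neither adjacent nor have a common neighbour in the complement. Both are impossible.
-/

open Finset Fintype SimpleGraph

section Minors

variable {V V' W : Type*} {G : SimpleGraph V} {G' : SimpleGraph V'} {H : SimpleGraph W}

/-- The sets `f w` are the branch sets of a minor model of `H` in `G`. This names the condition
under the existential quantifier of `SimpleGraph.IsMinor`. -/
structure IsMinorModel (H : SimpleGraph W) (G : SimpleGraph V) (f : W → Set V) : Prop where
  nonempty (w : W) : (f w).Nonempty
  connected (w : W) : (G.induce (f w)).Connected
  disjoint : Pairwise fun w₁ w₂ => Disjoint (f w₁) (f w₂)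
  exists_adj ⦃w₁ w₂ : W⦄ : H.Adj w₁ w₂ → ∃ v₁ ∈ f w₁, ∃ v₂ ∈ f w₂, G.Adj v₁ v₂

lemma isMinor_iff_exists_isMinorModel : H.IsMinor G ↔ ∃ f, IsMinorModel H G f :=
  ⟨fun ⟨f, hne, hconn, hdisj, hadj⟩ => ⟨f, hne, hconn, hdisj, hadj⟩,
    fun ⟨f, hf⟩ => ⟨f, hf.nonempty, hf.connected, hf.disjoint, hf.exists_adj⟩⟩

lemma IsMinorModel.image {f : W → Set V} (hf : IsMinorModel H G f) (p : Copy G G') :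
    IsMinorModel H G' fun w => p '' f w where
  nonempty w := (hf.nonempty w).image p
  connected w := by
    let ψ : G.induce (f w) →g G'.induce (p '' f w) :=
      { toFun := fun x => ⟨p x, Set.mem_image_of_mem p x.2⟩
        map_rel' := fun hab => p.toHom.map_adj hab }
    refine (hf.connected w).map ψ ?_
    rintro ⟨_, x, hx, rfl⟩
    exact ⟨⟨x, hx⟩, rfl⟩
  disjoint _ _ hw := (Set.disjoint_image_iff p.injective).2 (hf.disjoint hw)
  exists_adj w₁ w₂ hw := by
    obtain ⟨v₁, h₁, v₂, h₂, hv⟩ := hf.exists_adj hw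
    exact ⟨p v₁, Set.mem_image_of_mem p h₁, p v₂, Set.mem_image_of_mem p h₂, p.toHom.map_adj hv⟩

lemma isMinor_of_isContained (hH : H.IsMinor G) (hG : G ⊑ G') : H.IsMinor G' := by
  obtain ⟨f, hf⟩ := isMinor_iff_exists_isMinorModel.1 hH
  obtain ⟨p⟩ := hG
  exact isMinor_iff_exists_isMinorModel.2 ⟨_, hf.image p⟩

lemma isPlanar_of_isContained (hG' : G'.IsPlanar) (hG : G ⊑ G') : G.IsPlanar :=
  ⟨fun h => hG'.1 (isMinor_of_isContained h hG), fun h => hG'.2 (isMinor_of_isContained h hG)⟩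

lemma twoApex_of_isContained [Finite V'] (hG' : G'.TwoApex) (hG : G ⊑ G') : G.TwoApex := by
  obtain ⟨s, hs, hplanar⟩ := hG'
  obtain ⟨p⟩ := hG
  refine ⟨p ⁻¹' s, ?_, isPlanar_of_isContained hplanar ?_⟩
  · calc (p ⁻¹' s).ncard = (p '' (p ⁻¹' s)).ncard :=
        (Set.ncard_image_of_injective _ p.injective).symm
      _ ≤ s.ncard := Set.ncard_le_ncard (Set.image_preimage_subset p s)
      _ ≤ 2 := hs
  · exact ⟨⟨{ toFun := fun x => ⟨p x, x.2⟩, map_rel' := fun h => p.toHom.map_adj h },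
      fun _ _ h => Subtype.ext (p.injective (congrArg Subtype.val h))⟩⟩

lemma IsMinorModel.isContained_map {f : W → Set V} (hf : IsMinorModel H G f) (c : V → V')
    (g : W ↪ V') (hc : ∀ w, ∀ v ∈ f w, c v = g w) : H ⊑ G.map c := by
  refine ⟨⟨⟨g, fun {w₁ w₂} hw => ?_⟩, g.injective⟩⟩
  obtain ⟨v₁, h₁, v₂, h₂, hv⟩ := hf.exists_adj hw
  exact ⟨g.injective.ne hw.ne, v₁, v₂, hv, hc _ _ h₁, hc _ _ h₂⟩

lemma IsMinorModel.eq_of_mem {f : W → Set V} (hf : IsMinorModel H G f) {v : V} {w₁ w₂ : W}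
    (h₁ : v ∈ f w₁) (h₂ : v ∈ f w₂) : w₁ = w₂ := by
  by_contra hne
  exact Set.disjoint_left.1 (hf.disjoint hne) h₁ h₂

lemma IsMinorModel.sum_ncard_sub_one_add_card_le [Fintype V] [Fintype W] {f : W → Set V}
    (hf : IsMinorModel H G f) : ∑ w, ((f w).ncard - 1) + card W ≤ card V := by
  have hpos (w : W) : 0 < (f w).ncard := (Set.ncard_pos (Set.toFinite _)).2 (hf.nonempty w)
  calc ∑ w, ((f w).ncard - 1) + card W = ∑ w, ((f w).ncard - 1 + 1) := by
        rw [sum_add_distrib, sum_const, card_univ, smul_eq_mul, mul_one]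
    _ = ∑ w, (f w).ncard := sum_congr rfl fun w _ => Nat.sub_add_cancel (hpos w)
    _ = (⋃ w, f w).ncard := by
        rw [Set.ncard_iUnion_of_finite (fun w => (f w).toFinite) hf.disjoint,
          finsum_eq_sum_of_fintype]
    _ ≤ card V := by
        rw [← Nat.card_eq_fintype_card]
        exact Set.ncard_le_card _

lemma IsMinorModel.isContained_of_subsingleton {f : W → Set V} (hf : IsMinorModel H G f)
    (hsub : ∀ w, (f w).Subsingleton) : H ⊑ G := by
  choose g hg using hf.nonempty
  have hinj : Function.Injective g := fun w₁ w₂ h => hf.eq_of_mem (hg w₁) (h ▸ hg w₂)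
  simpa using hf.isContained_map id ⟨g, hinj⟩ fun w v hv => hsub w hv (hg w)

lemma isContained_of_isMinor_of_card_le [Fintype V] [Fintype W] (hH : H.IsMinor G)
    (hcard : card V ≤ card W) : H ⊑ G := by
  obtain ⟨f, hf⟩ := isMinor_iff_exists_isMinorModel.1 hH
  refine hf.isContained_of_subsingleton fun w => ?_
  have hle := hf.sum_ncard_sub_one_add_card_le
  have hw := single_le_sum_of_canonicallyOrdered (f := fun w => (f w).ncard - 1) (mem_univ w)
  rw [← Set.ncard_le_one_iff_subsingleton]
  lia

/-- The graph obtained from `G` by contracting the pair `x`, `y` to the vertex `y`. The vertex type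
is kept, so that `x` stays behind as an isolated vertex when `x ≠ y`. -/
def contract [DecidableEq V] (G : SimpleGraph V) (x y : V) : SimpleGraph V :=
  G.map (Function.update id x y)

lemma adj_or_eq_of_contract_adj [DecidableEq V] {x y u v : V} (h : (contract G x y).Adj u v)
    (hu : u ≠ x) (hv : v ≠ x) : G.Adj u v ∨ (u = y ∧ G.Adj x v) ∨ (v = y ∧ G.Adj u x) := by
  obtain ⟨hne, u', v', hadj, rfl, rfl⟩ := h
  grind [Function.update_apply]

lemma not_contract_adj_left [DecidableEq V] {x y v : V} (hxy : x ≠ y) :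
    ¬ (contract G x y).Adj x v := by
  rintro ⟨-, u', v', -, hu', -⟩
  grind [Function.update_apply]

lemma IsMinorModel.isContained_contract [DecidableEq V] {f : W → Set V} (hf : IsMinorModel H G f)
    {w₀ : W} {x y : V} (hw₀ : f w₀ = {x, y}) (hsub : ∀ w ≠ w₀, (f w).Subsingleton) :
    H ⊑ contract G x y := by
  choose g hg using hf.nonempty
  let c : V → V := Function.update id x y
  have hc₀ : ∀ v ∈ f w₀, c v = y := by
    simp only [hw₀, Set.mem_insert_iff, Set.mem_singleton_iff]
    grind [Function.update_apply]
  have hc : ∀ w ≠ w₀, ∀ v ∈ f w, c v = v := fun w hw v hv =>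
    Function.update_of_ne (fun hvx => hw (hf.eq_of_mem (hvx ▸ hv) (by simp [hw₀]))) ..
  have hmem (w : W) : c (g w) ∈ f w := by
    by_cases hw : w = w₀
    · subst hw
      simp [hc₀ _ (hg w), hw₀]
    · exact (hc w hw _ (hg w)).symm ▸ hg w
  have hinj : Function.Injective (c ∘ g) := fun w₁ w₂ h =>
    hf.eq_of_mem (hmem w₁) ((show c (g w₁) = c (g w₂) from h) ▸ hmem w₂)
  refine hf.isContained_map c ⟨c ∘ g, hinj⟩ fun w v hv => ?_
  by_cases hw : w = w₀
  · subst hw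
    exact (hc₀ v hv).trans (hc₀ _ (hg w)).symm
  · exact congrArg c (hsub w hw hv (hg w))

lemma adj_of_connected_induce_pair {x y : V} (h : (G.induce {x, y}).Connected) (hxy : x ≠ y) :
    G.Adj x y := by
  have : Nontrivial ({x, y} : Set V) := (Set.nontrivial_pair hxy).coe_sort
  obtain ⟨⟨z, rfl | rfl⟩, hz⟩ := h.preconnected.exists_adj_of_nontrivial ⟨x, by simp⟩
  · exact absurd rfl hz.ne
  · exact hz

lemma isContained_or_exists_isContained_contract [Fintype V] [Fintype W] [DecidableEq V]
    (hH : H.IsMinor G) (hcard : card V ≤ card W + 1) :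
    H ⊑ G ∨ ∃ x y, G.Adj x y ∧ H ⊑ contract G x y := by
  classical
  obtain ⟨f, hf⟩ := isMinor_iff_exists_isMinorModel.1 hH
  by_cases hall : ∀ w, (f w).Subsingleton
  · exact .inl (hf.isContained_of_subsingleton hall)
  obtain ⟨w₀, hw₀⟩ := not_forall.1 hall
  rw [← Set.ncard_le_one_iff_subsingleton, not_le] at hw₀
  have hle := hf.sum_ncard_sub_one_add_card_le
  rw [← add_sum_erase univ _ (mem_univ w₀)] at hle
  have hsub : ∀ w ≠ w₀, (f w).Subsingleton := fun w hw => by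
    have hw := single_le_sum_of_canonicallyOrdered (f := fun w => (f w).ncard - 1)
      (mem_erase.2 ⟨hw, mem_univ w⟩)
    rw [← Set.ncard_le_one_iff_subsingleton]
    lia
  obtain ⟨x, y, hxy, hpair⟩ := Set.ncard_eq_two.1 (show (f w₀).ncard = 2 by lia)
  exact .inr ⟨x, y, adj_of_connected_induce_pair (hpair ▸ hf.connected w₀) hxy,
    hf.isContained_contract hpair hsub⟩

end Minors

section PathInComplement

variable {V W W' : Type*} {G : SimpleGraph V}

lemma pathGraph_four_isContained_iff :
    pathGraph 4 ⊑ G ↔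
      ∃ a b c d, G.Adj a b ∧ G.Adj b c ∧ G.Adj c d ∧ a ≠ c ∧ a ≠ d ∧ b ≠ d := by
  constructor
  · rintro ⟨p⟩
    have hadj (i j : Fin 4) (h : i.val + 1 = j.val) : G.Adj (p i) (p j) :=
      p.toHom.map_adj (pathGraph_adj.2 (.inl h))
    exact ⟨p 0, p 1, p 2, p 3, hadj 0 1 rfl, hadj 1 2 rfl, hadj 2 3 rfl,
      p.injective.ne (by decide), p.injective.ne (by decide), p.injective.ne (by decide)⟩
  · rintro ⟨a, b, c, d, hab, hbc, hcd, hac, had, hbd⟩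
    let w : G.Walk a d := .cons hab (.cons hbc (.cons hcd .nil))
    have hw : w.IsPath := by
      simp [w, Walk.cons_isPath_iff, hab.ne, hbc.ne, hcd.ne, hac, had, hbd]
    exact hw.isContained_pathGraph

lemma isContained_compl_induce {P : SimpleGraph W} (p : Copy P Gᶜ) {t : Set V}
    (ht : ∀ a, p a ∈ t) : P ⊑ (G.induce t)ᶜ := by
  refine ⟨⟨⟨fun a => ⟨p a, ht a⟩, fun {a b} h => ?_⟩,
    fun _ _ h => p.injective (congrArg Subtype.val h)⟩⟩
  have hp : Gᶜ.Adj (p a) (p b) := p.toHom.map_adj h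
  exact ⟨fun e => hp.ne (congrArg Subtype.val e), hp.2⟩

lemma isLeft_eq_of_reachable_compl {a b : W ⊕ W'}
    (h : (completeBipartiteGraph W W')ᶜ.Reachable a b) : a.isLeft = b.isLeft := by
  obtain ⟨w⟩ := h
  induction w with
  | nil => rfl
  | @cons a b _ hadj _ ih =>
    rw [← ih]
    cases a <;> cases b <;> simp_all [completeBipartiteGraph]

lemma isContained_compl_of_card_le [Fintype V] [Fintype W] {H : SimpleGraph W} (h : H ⊑ G)
    (hcard : card V ≤ card W) : Gᶜ ⊑ Hᶜ := by
  obtain ⟨p⟩ := h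
  have hbij : Function.Bijective p :=
    (Fintype.bijective_iff_injective_and_card p).2
      ⟨p.injective, (Fintype.card_le_of_injective p p.injective).antisymm hcard⟩
  let e := Equiv.ofBijective p hbij
  refine ⟨⟨⟨e.symm, fun {u v} huv => ⟨e.symm.injective.ne huv.ne, fun hadj => huv.2 ?_⟩⟩,
    e.symm.injective⟩⟩
  have hadj' : G.Adj (e (e.symm u)) (e (e.symm v)) := p.toHom.map_adj hadj
  simpa only [e.apply_symm_apply] using hadj'

lemma not_completeBipartiteGraph_isMinor_of_isContained_compl [Fintype V] [Fintype W] [Fintype W']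
    (hV : card V ≤ card W + card W') {U : Type*} [Fintype U] {P : SimpleGraph U}
    (hconn : P.Connected) (hP : P ⊑ Gᶜ) (hW : card W < card U) (hW' : card W' < card U) :
    ¬ (completeBipartiteGraph W W').IsMinor G := by
  intro h
  have hcard : card V ≤ card (W ⊕ W') := by rwa [card_sum]
  obtain ⟨p⟩ := hP.trans
    (isContained_compl_of_card_le (isContained_of_isMinor_of_card_le h hcard) hcard)
  have hside (a b : U) : (p a).isLeft = (p b).isLeft :=
    isLeft_eq_of_reachable_compl ((hconn.preconnected a b).map p.toHom)
  obtain ⟨a⟩ := hconn.nonempty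
  rcases ha : p a with w | w
  · choose q hq using fun b => Sum.isLeft_iff.1 (show (p b).isLeft by simp [hside b a, ha])
    exact hW.not_ge (Fintype.card_le_of_injective q fun b c hbc =>
      p.injective ((hq b).trans (hbc ▸ (hq c).symm)))
  · choose q hq using fun b => Sum.isRight_iff.1
      (show (p b).isRight by simp [← Sum.not_isLeft, hside b a, ha])
    exact hW'.not_ge (Fintype.card_le_of_injective q fun b c hbc =>
      p.injective ((hq b).trans (hbc ▸ (hq c).symm)))

lemma exists_isClique_of_top_isContained [Fintype V] [Fintype W]
    (h : (⊤ : SimpleGraph W) ⊑ G) (hcard : card V ≤ card W + 1) :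
    ∃ s : Set V, G.IsClique s ∧ sᶜ.Subsingleton := by
  obtain ⟨p⟩ := h
  refine ⟨Set.range p, ?_, ?_⟩
  · rintro _ ⟨w₁, rfl⟩ _ ⟨w₂, rfl⟩ hne
    exact p.toHom.map_adj (ne_of_apply_ne p hne)
  · rw [← Set.ncard_le_one_iff_subsingleton, Set.ncard_compl,
      Set.ncard_range_of_injective (f := p) p.injective, Nat.card_eq_fintype_card,
      Nat.card_eq_fintype_card]
    lia

lemma pathGraph_four_free_compl_of_isClique {s : Set V} (hs : G.IsClique s)
    (hsc : sᶜ.Subsingleton) : (pathGraph 4).Free Gᶜ := by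
  intro hP
  obtain ⟨a, b, c, d, hab, hbc, hcd, hac, had, hbd⟩ := pathGraph_four_isContained_iff.1 hP
  have hmeet {u v : V} (huv : Gᶜ.Adj u v) : u ∈ sᶜ ∨ v ∈ sᶜ := by
    by_contra! h
    exact huv.2 (hs (not_not.1 h.1) (not_not.1 h.2) huv.ne)
  rcases hmeet hab with h | h <;> rcases hmeet hcd with h' | h'
  · exact hac (hsc h h')
  · exact had (hsc h h')
  · exact hbc.ne (hsc h h')
  · exact hbd (hsc h h')

lemma pathGraph_four_free_of_isVertexCover_pair {x y : V} (hcover : G.IsVertexCover {x, y})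
    (hxy : ¬ G.Adj x y) (hcommon : ∀ v, G.Adj v x → ¬ G.Adj v y) : (pathGraph 4).Free G := by
  intro hP
  obtain ⟨a, b, c, d, hab, hbc, hcd, hac, -, hbd⟩ := pathGraph_four_isContained_iff.1 hP
  have hnadj {u v : V} (hu : u ∈ ({x, y} : Set V)) (hv : v ∈ ({x, y} : Set V)) : ¬ G.Adj u v := by
    rcases hu with rfl | rfl <;> rcases hv with rfl | rfl <;> simp_all [G.adj_comm]
  have hnpath {u v w : V} (hu : u ∈ ({x, y} : Set V)) (hv : v ∈ ({x, y} : Set V)) (huv : u ≠ v)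
      (huw : G.Adj u w) : ¬ G.Adj w v := by
    rcases hu with rfl | rfl <;> rcases hv with rfl | rfl
    · exact absurd rfl huv
    · exact hcommon w huw.symm
    · exact fun hwv => hcommon w hwv huw.symm
    · exact absurd rfl huv
  rcases hcover hab with ha | hb <;> rcases hcover hcd with hc | hd
  · exact hnpath ha hc hac hab hbc
  · rcases hcover hbc with hb | hc
    · exact hnadj ha hb hab
    · exact hnadj hc hd hcd
  · exact hnadj hb hc hbc
  · exact hnpath hb hd hbd hbc hcd

lemma pathGraph_four_free_compl_of_isClique_contract [DecidableEq V] {x y : V} (hxy : G.Adj x y)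
    {s : Set V} (hs : (contract G x y).IsClique s) (hsc : sᶜ.Subsingleton) :
    (pathGraph 4).Free Gᶜ := by
  by_cases hx : x ∈ s
  · have hout {u : V} (hu : u ≠ x) : u ∈ sᶜ := fun hus =>
      not_contract_adj_left hxy.ne (hs hx hus hu.symm)
    refine pathGraph_four_free_of_isVertexCover_pair (x := x) (y := y) (fun u v _ => ?_)
      (fun h => h.2 hxy) fun v hvx hvy => hvy.ne (hsc (hout hvx.ne) (hout hxy.ne'))
    by_cases hu : u = x
    · exact .inl (.inl hu)
    · exact .inl (.inr (hsc (hout hu) (hout hxy.ne')))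
  · have hmem {u : V} (hu : u ≠ x) : u ∈ s := by
      by_contra hus
      exact hu (hsc hus hx)
    have hcontract {u v : V} (huv : Gᶜ.Adj u v) (hu : u ≠ x) (hv : v ≠ x) :
        (u = y ∧ G.Adj x v) ∨ (v = y ∧ G.Adj u x) :=
      (adj_or_eq_of_contract_adj (hs (hmem hu) (hmem hv) huv.ne) hu hv).resolve_left huv.2
    refine pathGraph_four_free_of_isVertexCover_pair (x := x) (y := y) (fun u v huv => ?_)
      (fun h => h.2 hxy) fun v hvx hvy => ?_
    · by_cases hu : u = x
      · exact .inl (.inl hu)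
      by_cases hv : v = x
      · exact .inr (.inl hv)
      exact (hcontract huv hu hv).imp (fun h => .inr h.1) (fun h => .inr h.1)
    · rcases hcontract hvy hvx.ne hxy.ne' with h | h
      · exact hvy.ne h.1
      · exact hvx.2 h.2

lemma not_top_isMinor_of_pathGraph_four_isContained_compl [Fintype V] [Fintype W]
    (hV : card V ≤ card W + 1) (hP : pathGraph 4 ⊑ Gᶜ) : ¬ (⊤ : SimpleGraph W).IsMinor G := by
  classical
  intro h
  rcases isContained_or_exists_isContained_contract h hV with hG | ⟨x, y, hxy, hG⟩
  · obtain ⟨s, hs, hsc⟩ := exists_isClique_of_top_isContained hG hV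
    exact pathGraph_four_free_compl_of_isClique hs hsc hP
  · obtain ⟨s, hs, hsc⟩ := exists_isClique_of_top_isContained hG hV
    exact pathGraph_four_free_compl_of_isClique_contract hxy hs hsc hP

lemma isPlanar_of_pathGraph_four_isContained_compl [Fintype V] (hV : card V ≤ 6)
    (hP : pathGraph 4 ⊑ Gᶜ) : G.IsPlanar :=
  ⟨not_top_isMinor_of_pathGraph_four_isContained_compl (by simpa using hV) hP,
    not_completeBipartiteGraph_isMinor_of_isContained_compl (by simpa using hV)
      (pathGraph_connected 3) hP (by simp) (by simp)⟩

lemma twoApex_of_pathGraph_four_isContained_compl [Fintype V] (hV : card V ≤ 8)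
    (hP : pathGraph 4 ⊑ Gᶜ) : G.TwoApex := by
  classical
  obtain ⟨p⟩ := hP
  have hrange : #(univ.image p)ᶜ = card V - 4 := by
    rw [card_compl, card_image_of_injective univ (f := p) p.injective, card_univ, Fintype.card_fin]
  obtain ⟨s, hs, hcard⟩ := exists_subset_card_eq (min_le_right 2 #(univ.image p)ᶜ)
  refine ⟨s, ?_, isPlanar_of_pathGraph_four_isContained_compl ?_
    (isContained_compl_induce p fun a ha => ?_)⟩
  · rw [Set.ncard_coe_finset]
    lia
  · have hs_card : card (s : Set V) = #s := Fintype.card_coe s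
    rw [Fintype.card_compl_set]
    lia
  · simpa using hs ha

end PathInComplement
section PathFree

variable {V : Type*} {G : SimpleGraph V}

lemma neighborFinset_subset_pair_of_pathGraph_four_free [DecidableEq V]
    (hG : (pathGraph 4).Free G) {u v w : V} [Fintype (G.neighborSet v)] (huv : G.Adj u v)
    (huw : G.Adj u w) (hwv : w ≠ v) : G.neighborFinset v ⊆ {u, w} := by
  intro z hz
  rw [mem_neighborFinset] at hz
  by_contra hmem
  simp only [mem_insert, mem_singleton, not_or] at hmem
  exact hG (pathGraph_four_isContained_iff.2
    ⟨w, u, v, z, huw.symm, huv, hz, hwv, Ne.symm hmem.2, Ne.symm hmem.1⟩)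

lemma degree_le_two_of_pathGraph_four_free (hG : (pathGraph 4).Free G) {u v : V}
    [Fintype (G.neighborSet u)] [Fintype (G.neighborSet v)] (huv : G.Adj u v)
    (hu : 1 < G.degree u) : G.degree v ≤ 2 := by
  classical
  obtain ⟨w, hw, hwv⟩ := exists_mem_ne hu v
  rw [mem_neighborFinset] at hw
  exact (card_le_card (neighborFinset_subset_pair_of_pathGraph_four_free hG huv hw hwv)).trans
    card_le_two

lemma degree_eq_two_or_one_lt_of_pathGraph_four_free (hG : (pathGraph 4).Free G) {u v : V}
    [Fintype (G.neighborSet u)] [Fintype (G.neighborSet v)] (huv : G.Adj u v) :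
    G.degree u = 2 ∧ G.degree v = 2 ∨ 1 < (G.degree u : ℚ)⁻¹ + (G.degree v : ℚ)⁻¹ := by
  have hu : 0 < G.degree u := G.degree_pos_iff_exists_adj u |>.2 ⟨v, huv⟩
  have hv : 0 < G.degree v := G.degree_pos_iff_exists_adj v |>.2 ⟨u, huv.symm⟩
  by_cases hu₁ : G.degree u = 1
  · simp [hu₁, hv]
  by_cases hv₁ : G.degree v = 1
  · simp [hv₁, hu]
  have := degree_le_two_of_pathGraph_four_free hG huv (by lia)
  have := degree_le_two_of_pathGraph_four_free hG huv.symm (by lia)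
  exact .inl (by lia)

lemma card_insert_neighborFinset [DecidableEq V] (v : V) [Fintype (G.neighborSet v)] :
    #(insert v (G.neighborFinset v)) = G.degree v + 1 := by
  rw [card_insert_of_notMem (G.notMem_neighborFinset_self v), card_neighborFinset_eq_degree]

lemma insert_neighborFinset_eq_of_pathGraph_four_free [DecidableEq V] [G.LocallyFinite]
    (hG : (pathGraph 4).Free G) (hreg : G.IsRegularOfDegree 2) {u v : V} (huv : G.Adj u v) :
    insert u (G.neighborFinset u) = insert v (G.neighborFinset v) := by
  obtain ⟨w, hw, hwv⟩ := exists_mem_ne (show 1 < #(G.neighborFinset u) by simp [hreg u]) v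
  have hsub := neighborFinset_subset_pair_of_pathGraph_four_free hG huv
    ((G.mem_neighborFinset u w).1 hw) hwv
  refine (eq_of_subset_of_card_le (insert_subset ?_ (hsub.trans ?_)) ?_).symm
  · exact mem_insert_of_mem ((G.mem_neighborFinset u v).2 huv)
  · exact insert_subset_insert u (singleton_subset_iff.2 hw)
  · rw [card_insert_neighborFinset, card_insert_neighborFinset, hreg u, hreg v]

variable [Fintype V] [DecidableRel G.Adj]

lemma sum_dart_fst {M : Type*} [AddCommMonoid M] (f : V → M) :
    ∑ d : G.Dart, f d.fst = ∑ v, G.degree v • f v := by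
  classical
  rw [← sum_fiberwise univ (fun d : G.Dart => d.fst)]
  refine sum_congr rfl fun v _ => ?_
  rw [← G.dart_fst_fiber_card_eq_degree v, ← sum_const]
  exact sum_congr rfl fun d hd => congrArg f (mem_filter.1 hd).2

lemma sum_dart_snd {M : Type*} [AddCommMonoid M] (f : V → M) :
    ∑ d : G.Dart, f d.snd = ∑ v, G.degree v • f v :=
  (Equiv.sum_comp Dart.symm_involutive.toPerm fun d : G.Dart => f d.fst).trans (sum_dart_fst f)

lemma sum_dart_inv_degree_add_inv_degree_le :
    ∑ d : G.Dart, ((G.degree d.fst : ℚ)⁻¹ + (G.degree d.snd : ℚ)⁻¹) ≤ 2 * card V := by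
  have hle : ∑ v, G.degree v • (G.degree v : ℚ)⁻¹ ≤ card V := by
    calc ∑ v, G.degree v • (G.degree v : ℚ)⁻¹ ≤ ∑ _v : V, (1 : ℚ) :=
          sum_le_sum fun v _ => by rw [nsmul_eq_mul]; exact mul_inv_le_one
      _ = card V := by simp
  rw [sum_add_distrib, sum_dart_fst (fun v => (G.degree v : ℚ)⁻¹),
    sum_dart_snd (fun v => (G.degree v : ℚ)⁻¹), two_mul]
  exact add_le_add hle hle

lemma degree_eq_two_of_pathGraph_four_free_of_card_le (hG : (pathGraph 4).Free G)
    (hcard : card V ≤ #G.edgeFinset) {u v : V} (huv : G.Adj u v) : G.degree u = 2 := by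
  by_contra hne
  have hone_le (d : G.Dart) : (1 : ℚ) ≤ (G.degree d.fst : ℚ)⁻¹ + (G.degree d.snd : ℚ)⁻¹ := by
    rcases degree_eq_two_or_one_lt_of_pathGraph_four_free hG d.adj with ⟨h₁, h₂⟩ | h
    · norm_num [h₁, h₂]
    · exact h.le
  have hlt : ∑ _d : G.Dart, (1 : ℚ) < 2 * card V :=
    (sum_lt_sum (fun d _ => hone_le d) ⟨⟨(u, v), huv⟩, mem_univ _,
      (degree_eq_two_or_one_lt_of_pathGraph_four_free hG huv).resolve_left
        fun h => hne h.1⟩).trans_le sum_dart_inv_degree_add_inv_degree_le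
  rw [sum_const, card_univ, dart_card_eq_twice_card_edges, nsmul_eq_mul, mul_one] at hlt
  norm_cast at hlt
  lia

lemma isRegularOfDegree_two_of_pathGraph_four_free_of_card_le (hG : (pathGraph 4).Free G)
    (hcard : card V ≤ #G.edgeFinset) : G.IsRegularOfDegree 2 := by
  have hle (v : V) : G.degree v ≤ 2 := by
    by_contra! h
    obtain ⟨u, hu⟩ := (G.degree_pos_iff_exists_adj v).1 (by lia)
    exact h.ne' (degree_eq_two_of_pathGraph_four_free_of_card_le hG hcard hu)
  have hsum : ∑ v, G.degree v = ∑ _v : V, 2 := by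
    refine (sum_le_sum fun v _ => hle v).antisymm ?_
    rw [sum_degrees_eq_twice_card_edges, sum_const, card_univ, smul_eq_mul]
    lia
  exact fun v => (sum_eq_sum_iff_of_le fun v _ => hle v).1 hsum v (mem_univ v)

lemma three_dvd_card_of_pathGraph_four_free_of_isRegularOfDegree (hG : (pathGraph 4).Free G)
    (hreg : G.IsRegularOfDegree 2) : 3 ∣ card V := by
  classical
  -- Adjacent vertices have equal closed neighbourhoods, which thus partition `V` into triples.
  rw [← card_univ, card_eq_sum_card_image (fun v => insert v (G.neighborFinset v)) univ]
  refine dvd_sum fun t ht => ?_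
  obtain ⟨v, -, rfl⟩ := mem_image.1 ht
  have hfibre : ({u | insert u (G.neighborFinset u) = insert v (G.neighborFinset v)} : Finset V) =
      insert v (G.neighborFinset v) := by
    ext u
    rw [mem_filter_univ]
    refine ⟨fun h => h ▸ mem_insert_self u _, fun hu => ?_⟩
    rcases mem_insert.1 hu with rfl | hu
    · rfl
    · rw [mem_neighborFinset] at hu
      exact (insert_neighborFinset_eq_of_pathGraph_four_free hG hreg hu).symm
  rw [hfibre, card_insert_neighborFinset, hreg v]

lemma pathGraph_four_isContained_of_card_le_card_edgeFinset (hcard : card V ≤ #G.edgeFinset)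
    (hdvd : ¬ 3 ∣ card V) : pathGraph 4 ⊑ G := by
  by_contra hG
  exact hdvd (three_dvd_card_of_pathGraph_four_free_of_isRegularOfDegree hG
    (isRegularOfDegree_two_of_pathGraph_four_free_of_card_le hG hcard))

end PathFree

lemma card_edgeFinset_add_card_edgeFinset_compl {V : Type*} [Fintype V] [DecidableEq V]
    (G : SimpleGraph V) [DecidableRel G.Adj] :
    #G.edgeFinset + #Gᶜ.edgeFinset = (card V).choose 2 := by
  rw [← card_union_of_disjoint (disjoint_edgeFinset.2 disjoint_compl_right), ← edgeFinset_sup,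
    ← card_edgeFinset_top_eq_card_choose_two]
  congr! 2
  exact sup_compl_eq_top

/-- Every finite simple graph with at most 8 vertices and at most 20 edges is 2-apex. -/
theorem stmt1 {V : Type*} [Fintype V] (G : SimpleGraph V)
    (hV : Fintype.card V ≤ 8) (hE : G.edgeSet.ncard ≤ 20) : G.TwoApex := by
  classical
  obtain ⟨e⟩ : Nonempty (V ↪ Fin 8) := Function.Embedding.nonempty_of_card_le (by simpa using hV)
  have hedge : #(G.map e).edgeFinset ≤ 20 := by
    rwa [card_edgeFinset_map, ← Set.ncard_coe_finset, coe_edgeFinset]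
  have hcompl : card (Fin 8) ≤ #(G.map e)ᶜ.edgeFinset := by
    have hchoose : (card (Fin 8)).choose 2 = 28 := rfl
    have hadd := card_edgeFinset_add_card_edgeFinset_compl (G.map e)
    rw [Fintype.card_fin]
    lia
  have hpath : pathGraph 4 ⊑ (G.map e)ᶜ :=
    pathGraph_four_isContained_of_card_le_card_edgeFinset hcompl (by decide)
  exact twoApex_of_isContained
    (twoApex_of_pathGraph_four_isContained_compl (Fintype.card_fin 8).le hpath)
    ⟨(SimpleGraph.Embedding.map e G).toCopy⟩
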